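/- arXiv:1705.07484 — 3 statements merged into one kernel-verified Lean document; each statement's English description precedes it below -/
import Mathlib

section
/- Suppose $\Lambda_1, \Lambda_2, \Lambda_3$ are real numbers each equal to $0$ or $1$, and $\Lambda_i^-, \Lambda_i^+$ are real numbers satisfying $\Lambda_i^- \leq \Lambda_i \leq \Lambda_i^+$ for $i = 1, 2, 3$. Then $\Lambda_1 \Lambda_2 \Lambda_3 \geq \Lambda_1^- \Lambda_2^+ \Lambda_3^+ + \Lambda_1^+ \Lambda_2^- \Lambda_3^+ + \Lambda_1^+ \Lambda_2^+ \Lambda_3^- - 2\,\Lambda_1^+ \Lambda_2^+ \Lambda_3^+$. -/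
/-! Writing `Λᵢp = Λᵢ + xᵢ` and `Λᵢm = Λᵢ - yᵢ` with `xᵢ, yᵢ ≥ 0`, the left side minus the right
side expands to `∑ Λᵢ xⱼ xₖ + 2 x₁ x₂ x₃ + ∑ yᵢ Λⱼp Λₖp` (each sum over the three choices of `i`,
with `{i, j, k} = {1, 2, 3}`), and every term is nonnegative because `Λᵢ ≥ 0`. -/

theorem stmt_1 (Λ₁ Λ₂ Λ₃ Λ₁m Λ₂m Λ₃m Λ₁p Λ₂p Λ₃p : ℝ)
    (h1 : Λ₁ = 0 ∨ Λ₁ = 1) (h2 : Λ₂ = 0 ∨ Λ₂ = 1) (h3 : Λ₃ = 0 ∨ Λ₃ = 1)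
    (h1m : Λ₁m ≤ Λ₁) (h1p : Λ₁ ≤ Λ₁p)
    (h2m : Λ₂m ≤ Λ₂) (h2p : Λ₂ ≤ Λ₂p)
    (h3m : Λ₃m ≤ Λ₃) (h3p : Λ₃ ≤ Λ₃p) :
    Λ₁ * Λ₂ * Λ₃ ≥
      Λ₁m * Λ₂p * Λ₃p + Λ₁p * Λ₂m * Λ₃p + Λ₁p * Λ₂p * Λ₃m - 2 * (Λ₁p * Λ₂p * Λ₃p) := by
  have n1 : 0 ≤ Λ₁ := by rcases h1 with h | h <;> simp [h]
  have n2 : 0 ≤ Λ₂ := by rcases h2 with h | h <;> simp [h]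
  have n3 : 0 ≤ Λ₃ := by rcases h3 with h | h <;> simp [h]
  obtain ⟨x₁, hx₁, rfl⟩ : ∃ x, 0 ≤ x ∧ Λ₁p = Λ₁ + x := ⟨Λ₁p - Λ₁, by linarith, by ring⟩
  obtain ⟨x₂, hx₂, rfl⟩ : ∃ x, 0 ≤ x ∧ Λ₂p = Λ₂ + x := ⟨Λ₂p - Λ₂, by linarith, by ring⟩
  obtain ⟨x₃, hx₃, rfl⟩ : ∃ x, 0 ≤ x ∧ Λ₃p = Λ₃ + x := ⟨Λ₃p - Λ₃, by linarith, by ring⟩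
  obtain ⟨y₁, hy₁, rfl⟩ : ∃ y, 0 ≤ y ∧ Λ₁m = Λ₁ - y := ⟨Λ₁ - Λ₁m, by linarith, by ring⟩
  obtain ⟨y₂, hy₂, rfl⟩ : ∃ y, 0 ≤ y ∧ Λ₂m = Λ₂ - y := ⟨Λ₂ - Λ₂m, by linarith, by ring⟩
  obtain ⟨y₃, hy₃, rfl⟩ : ∃ y, 0 ≤ y ∧ Λ₃m = Λ₃ - y := ⟨Λ₃ - Λ₃m, by linarith, by ring⟩
  have key : 0 ≤ Λ₁ * x₂ * x₃ + Λ₂ * x₁ * x₃ + Λ₃ * x₁ * x₂ + 2 * (x₁ * x₂ * x₃)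
      + y₁ * (Λ₂ + x₂) * (Λ₃ + x₃) + y₂ * (Λ₁ + x₁) * (Λ₃ + x₃)
      + y₃ * (Λ₁ + x₁) * (Λ₂ + x₂) := by positivity
  linarith
end

section
/- Let $c$ and $\mu$ be fixed real numbers with $1 < c < \frac{17}{16}$ and $0 < \mu < 1$. There exists a constant $C = C(c, \mu) > 0$ such that for every real $X \geq 3$, every real $D$ with $2 \leq D \leq X$, every real $\Delta$ with $0 < \Delta \leq X^{1-c}$, and every sieve weight $\lambda$ of level $D$, one has $\int_{-\Delta}^{\Delta} |L(\alpha)|^2 \, d\alpha \leq C X^{2-c} (\log X)^6$. -/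
/-!
Exchanging the two sums, `L(α) = ∑_p a_p e(α ⌊p^c⌋)` with `a_p = log p · ∑_{d ∣ p+2} λ(d)`, so that
`|a_p| ≤ log X · τ(p + 2)`. Expanding the square and integrating termwise, the diagonal contributes
`2Δ ∑ a_p²`, and each off-diagonal pair at most `|a_p a_q| / |⌊p^c⌋ - ⌊q^c⌋|`. Since `c > 1`, the
floors are separated: `|⌊p^c⌋ - ⌊q^c⌋| ≥ (μX)^(c-1) |p - q| / 2` (`floor_rpow_gap`). With
`|a_p a_q| ≤ (a_p² + a_q²) / 2` and a harmonic sum over `|p - q|`, the integral is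
`≪ X^(1-c) log X · ∑ a_p²` (`mean_square_le`). No primality is needed any more: the elementary bound
`∑_{n ≤ N} τ(n)² ≤ N (1 + log N)³` (`sum_tau_sq_le`) gives `∑ a_p² ≪ X (log X)^5`.
-/

/-- `e(t) = e^{2πit}`. -/
noncomputable def e (t : ℝ) : ℂ := Complex.exp (2 * Real.pi * Complex.I * t)

/-- A sieve weight of level `D`. -/
def IsSieveWeight (D : ℝ) (lam : ℕ → ℝ) : Prop :=
  (∀ d : ℕ, |lam d| ≤ 1) ∧ ∀ d : ℕ, (D < (d : ℝ) ∨ 2 ∣ d ∨ ¬ Squarefree d) → lam d = 0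

/-- The exponential sum `L(α)` over primes `μX < p ≤ X` with `p + 2 ≡ 0 (mod d)`. -/
noncomputable def L (c μ X D : ℝ) (lam : ℕ → ℝ) (α : ℝ) : ℂ :=
  ∑ d ∈ Finset.range (⌊D⌋₊ + 1), (lam d : ℂ) *
    ∑ p ∈ (Finset.range (⌊X⌋₊ + 1)).filter
        (fun p : ℕ => p.Prime ∧ μ * X < (p : ℝ) ∧ d ∣ (p + 2)),
      (Real.log p : ℂ) * e (α * ⌊(p : ℝ) ^ c⌋)

/-! ### The second moment of the divisor function -/

open Finset in
/-- Dirichlet's rearrangement: pairs `(d, m)` with `d * m ≤ N`, grouped by product or by `d`. -/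
lemma sum_divisorsAntidiagonal_swap (N : ℕ) (f : ℕ → ℕ → ℝ) :
    ∑ n ∈ Ioc 0 N, ∑ x ∈ n.divisorsAntidiagonal, f x.1 x.2
      = ∑ d ∈ Ioc 0 N, ∑ m ∈ Ioc 0 (N / d), f d m := by
  rw [Finset.sum_sigma', Finset.sum_sigma']
  refine Finset.sum_bij' (fun x _ => ⟨x.2.1, x.2.2⟩) (fun y _ => ⟨y.1 * y.2, (y.1, y.2)⟩)
    ?_ ?_ ?_ ?_ ?_
  · rintro ⟨n, d, m⟩ h
    simp only [mem_sigma, mem_Ioc, Nat.mem_divisorsAntidiagonal] at h ⊢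
    obtain ⟨⟨h0, hN⟩, rfl, -⟩ := h
    have hd : 0 < d := Nat.pos_of_mul_pos_right h0
    have hm : 0 < m := Nat.pos_of_mul_pos_left h0
    refine ⟨⟨hd, le_trans (Nat.le_mul_of_pos_right d hm) hN⟩, hm, ?_⟩
    rw [Nat.le_div_iff_mul_le hd, mul_comm]
    exact hN
  · rintro ⟨d, m⟩ h
    simp only [mem_sigma, mem_Ioc, Nat.mem_divisorsAntidiagonal] at h ⊢
    obtain ⟨⟨hd, -⟩, hm, hN⟩ := h
    rw [Nat.le_div_iff_mul_le hd, mul_comm] at hN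
    have := Nat.mul_pos hd hm
    exact ⟨⟨this, hN⟩, trivial, this.ne'⟩
  · rintro ⟨n, d, m⟩ h
    simp only [mem_sigma, mem_Ioc, Nat.mem_divisorsAntidiagonal] at h
    obtain ⟨-, rfl, -⟩ := h
    rfl
  · rintro ⟨d, m⟩ _
    rfl
  · rintro ⟨n, d, m⟩ _
    rfl

/-- The harmonic number `1 + 1/2 + ⋯ + 1/N` as a real number. -/
noncomputable def harm (N : ℕ) : ℝ := ∑ j ∈ Finset.Ioc 0 N, (j : ℝ)⁻¹

lemma harm_nonneg (N : ℕ) : 0 ≤ harm N := Finset.sum_nonneg fun _ _ => by positivity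

lemma harm_mono {M N : ℕ} (h : M ≤ N) : harm M ≤ harm N :=
  Finset.sum_le_sum_of_subset_of_nonneg (Finset.Ioc_subset_Ioc_right h)
    fun _ _ _ => by positivity

lemma harm_le (N : ℕ) : harm N ≤ 1 + Real.log N := by
  refine le_trans (le_of_eq ?_) (harmonic_le_one_add_log N)
  rw [harmonic_eq_sum_Icc]
  push_cast
  rfl

/-- The number of divisors of `n`, as a real number. -/
noncomputable def tau (n : ℕ) : ℝ := (n.divisors.card : ℝ)

lemma tau_nonneg (n : ℕ) : 0 ≤ tau n := Nat.cast_nonneg _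

lemma tau_mul_le (m n : ℕ) : tau (m * n) ≤ tau m * tau n := by
  unfold tau
  rw [Nat.divisors_mul]
  exact_mod_cast Finset.card_mul_le

lemma tau_eq (n : ℕ) : tau n = ∑ _x ∈ n.divisorsAntidiagonal, (1 : ℝ) := by
  rw [Finset.sum_const, nsmul_eq_mul, mul_one, tau, ← Nat.map_div_right_divisors, Finset.card_map]

lemma sum_tau_le (N : ℕ) : ∑ n ∈ Finset.Ioc 0 N, tau n ≤ N * harm N := by
  simp_rw [tau_eq]
  rw [sum_divisorsAntidiagonal_swap N (fun _ _ => 1), harm, Finset.mul_sum]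
  refine Finset.sum_le_sum fun d _ => ?_
  simp only [Finset.sum_const, Nat.card_Ioc, tsub_zero, nsmul_eq_mul, mul_one]
  rw [← div_eq_mul_inv]
  exact Nat.cast_div_le

lemma sum_tau_div_le (N : ℕ) : ∑ n ∈ Finset.Ioc 0 N, tau n / n ≤ harm N ^ 2 := by
  have h : ∀ n ∈ Finset.Ioc 0 N,
      tau n / n = ∑ x ∈ n.divisorsAntidiagonal, (x.1 : ℝ)⁻¹ * (x.2 : ℝ)⁻¹ := by
    intro n _
    rw [tau_eq, Finset.sum_div]
    refine Finset.sum_congr rfl fun x hx => ?_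
    rw [← (Nat.mem_divisorsAntidiagonal.1 hx).1]
    push_cast
    rw [one_div, mul_inv]
  rw [Finset.sum_congr rfl h, sum_divisorsAntidiagonal_swap N (fun d m => (d : ℝ)⁻¹ * (m : ℝ)⁻¹),
    sq]
  conv_rhs => rw [harm, Finset.sum_mul]
  refine Finset.sum_le_sum fun d _ => ?_
  rw [← Finset.mul_sum]
  exact mul_le_mul_of_nonneg_left (harm_mono (Nat.div_le_self N d)) (by positivity)

/-- The second moment of the divisor function, from `τ(dm) ≤ τ(d)τ(m)` and
`τ(n)² = ∑_{dm = n} τ(dm)`. -/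
lemma sum_tau_sq_le (N : ℕ) : ∑ n ∈ Finset.Ioc 0 N, tau n ^ 2 ≤ N * harm N ^ 3 := by
  have h : ∀ n ∈ Finset.Ioc 0 N,
      tau n ^ 2 = ∑ x ∈ n.divisorsAntidiagonal, tau (x.1 * x.2) := by
    intro n _
    have : ∀ x ∈ n.divisorsAntidiagonal, tau (x.1 * x.2) = tau n * 1 := by
      intro x hx
      rw [(Nat.mem_divisorsAntidiagonal.1 hx).1, mul_one]
    rw [Finset.sum_congr rfl this, ← Finset.mul_sum, ← tau_eq, sq]
  rw [Finset.sum_congr rfl h, sum_divisorsAntidiagonal_swap N (fun d m => tau (d * m))]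
  calc ∑ d ∈ Finset.Ioc 0 N, ∑ m ∈ Finset.Ioc 0 (N / d), tau (d * m)
      ≤ ∑ d ∈ Finset.Ioc 0 N, (N * harm N) * (tau d / d) := by
        refine Finset.sum_le_sum fun d _ => ?_
        calc ∑ m ∈ Finset.Ioc 0 (N / d), tau (d * m)
            ≤ ∑ m ∈ Finset.Ioc 0 (N / d), tau d * tau m :=
              Finset.sum_le_sum fun m _ => tau_mul_le d m
          _ = tau d * ∑ m ∈ Finset.Ioc 0 (N / d), tau m := by rw [Finset.mul_sum]
          _ ≤ tau d * ((N / d : ℝ) * harm N) := by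
              refine mul_le_mul_of_nonneg_left ?_ (tau_nonneg d)
              refine (sum_tau_le _).trans ?_
              exact mul_le_mul Nat.cast_div_le (harm_mono (Nat.div_le_self N d))
                (harm_nonneg _) (by positivity)
          _ = (N * harm N) * (tau d / d) := by ring
    _ = (N * harm N) * ∑ d ∈ Finset.Ioc 0 N, tau d / d := by rw [Finset.mul_sum]
    _ ≤ (N * harm N) * harm N ^ 2 :=
        mul_le_mul_of_nonneg_left (sum_tau_div_le N)
          (mul_nonneg (Nat.cast_nonneg _) (harm_nonneg _))
    _ = N * harm N ^ 3 := by ring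

/-! ### Mean squares of exponential sums with separated frequencies -/

/-- The diagonal term `k = n` contributes `0⁻¹ = 0`. -/
lemma sum_inv_dist_le (N n : ℕ) (hn : n ≤ N) :
    ∑ k ∈ Finset.range (N + 1), |(n : ℝ) - k|⁻¹ ≤ 2 * harm N := by
  have key : ∀ s : Finset ℕ, ∀ f : ℕ → ℕ,
      (∀ k ∈ s, |(n : ℝ) - k| = f k) → Set.InjOn f s → (∀ k ∈ s, f k ≤ N) →
      ∑ k ∈ s, |(n : ℝ) - k|⁻¹ ≤ harm N := by
    intro s f hf hinj hle
    rw [Finset.sum_congr rfl (fun k hk => by rw [hf k hk]),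
      ← Finset.sum_image (s := s) (g := f) (f := fun j : ℕ => (j : ℝ)⁻¹) hinj]
    have : harm N = ∑ j ∈ Finset.range (N + 1), (j : ℝ)⁻¹ := by
      rw [Finset.sum_range_succ', harm]
      simp only [Nat.cast_zero, inv_zero, add_zero]
      rw [Finset.range_eq_Ico, Finset.sum_Ico_add' (fun j : ℕ => (j : ℝ)⁻¹) 0 N 1]
      rfl
    rw [this]
    refine Finset.sum_le_sum_of_subset_of_nonneg ?_ fun _ _ _ => by positivity
    intro j hj
    obtain ⟨k, hk, rfl⟩ := Finset.mem_image.1 hj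
    exact Finset.mem_range.2 (Nat.lt_succ_of_le (hle k hk))
  rw [← Finset.sum_filter_add_sum_filter_not (Finset.range (N + 1)) (fun k => k ≤ n), two_mul]
  refine add_le_add (key _ (fun k => n - k) ?_ ?_ ?_)
    (key _ (fun k => k - n) ?_ ?_ ?_)
  · intro k hk
    have hk' : k ≤ n := (Finset.mem_filter.1 hk).2
    rw [Nat.cast_sub hk', abs_of_nonneg (sub_nonneg.2 (by exact_mod_cast hk'))]
  · intro a ha b hb hab
    have ha' : a ≤ n := (Finset.mem_filter.1 ha).2
    have hb' : b ≤ n := (Finset.mem_filter.1 hb).2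
    simp only at hab
    omega
  · intro k _
    omega
  · intro k hk
    have hk' : n ≤ k := (not_le.1 (Finset.mem_filter.1 hk).2).le
    rw [Nat.cast_sub hk', abs_sub_comm, abs_of_nonneg (sub_nonneg.2 (by exact_mod_cast hk'))]
  · intro a ha b hb hab
    have ha' := (Finset.mem_filter.1 ha).2
    have hb' := (Finset.mem_filter.1 hb).2
    simp only at hab
    omega
  · intro k hk
    have := Finset.mem_range.1 (Finset.mem_filter.1 hk).1
    omega

lemma norm_e (t : ℝ) : ‖e t‖ = 1 := by
  have : e t = Complex.exp ((2 * Real.pi * t : ℝ) * Complex.I) := by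
    unfold e
    congr 1
    push_cast
    ring
  rw [this, Complex.norm_exp_ofReal_mul_I]

lemma e_mul_conj (s t : ℝ) : e s * (starRingEnd ℂ) (e t) = e (s - t) := by
  unfold e
  rw [← Complex.exp_conj, ← Complex.exp_add]
  congr 1
  simp only [map_mul, Complex.conj_I, Complex.conj_ofReal, map_ofNat]
  push_cast
  ring

lemma continuous_e_mul (m : ℝ) : Continuous fun α : ℝ => e (α * m) := by
  unfold e
  fun_prop

lemma norm_integral_e_le (Δ m : ℝ) (hm : m ≠ 0) :
    ‖∫ α in (-Δ)..Δ, e (α * m)‖ ≤ |m|⁻¹ := by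
  have hz : (2 * Real.pi * Complex.I * m : ℂ) ≠ 0 := by
    simp [Real.pi_ne_zero, hm]
  have h : ∀ α : ℝ, e (α * m) = Complex.exp ((2 * Real.pi * Complex.I * m) * α) := by
    intro α
    unfold e
    congr 1
    push_cast
    ring
  simp_rw [h]
  rw [integral_exp_mul_complex hz, ← h, ← h, norm_div]
  have hn : ‖(2 * Real.pi * Complex.I * m : ℂ)‖ = 2 * Real.pi * |m| := by
    simp [abs_of_pos Real.pi_pos]
  have hm' : 0 < |m| := abs_pos.2 hm
  have h2 : ‖e (Δ * m) - e (-Δ * m)‖ ≤ 2 := by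
    refine (norm_sub_le _ _).trans ?_
    rw [norm_e, norm_e]
    norm_num
  rw [hn, div_le_iff₀ (by positivity)]
  have : |m|⁻¹ * (2 * Real.pi * |m|) = 2 * Real.pi := by field_simp
  rw [this]
  linarith [Real.pi_gt_three]

lemma norm_integral_e_le_length (Δ m : ℝ) (hΔ : 0 < Δ) :
    ‖∫ α in (-Δ)..Δ, e (α * m)‖ ≤ 2 * Δ := by
  have := intervalIntegral.norm_integral_le_of_norm_le_const (a := -Δ) (b := Δ) (C := 1)
    (f := fun α => e (α * m)) (fun x _ => (norm_e _).le)
  rw [abs_of_pos (by linarith)] at this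
  linarith

/-- A large-sieve type mean value estimate, with a logarithmic loss: if the frequencies `m n` are
separated by at least `δ / 2` per unit step, then the mean square over `[-Δ, Δ]` is bounded by the
diagonal times `2Δ + O(δ⁻¹ log N)`. -/
lemma mean_square_le (N : ℕ) (s : Finset ℕ) (hs : s ⊆ Finset.range (N + 1)) (a : ℕ → ℝ)
    (m : ℕ → ℝ) (Δ δ : ℝ) (hΔ : 0 < Δ) (hδ : 0 < δ)
    (hm : ∀ n ∈ s, ∀ k ∈ s, k < n → δ * ((n : ℝ) - k) ≤ 2 * (m n - m k)) :
    ∫ α in (-Δ)..Δ, ‖∑ n ∈ s, (a n : ℂ) * e (α * m n)‖ ^ 2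
      ≤ (∑ n ∈ s, a n ^ 2) * (2 * Δ + 4 / δ * harm N) := by
  have hexp : ∀ α : ℝ, ((‖∑ n ∈ s, (a n : ℂ) * e (α * m n)‖ ^ 2 : ℝ) : ℂ)
      = ∑ n ∈ s, ∑ k ∈ s, ((a n * a k : ℝ) : ℂ) * e (α * (m n - m k)) := by
    intro α
    have := Complex.mul_conj' (∑ n ∈ s, (a n : ℂ) * e (α * m n))
    rw [Complex.ofReal_pow, ← this, map_sum, Finset.sum_mul_sum]
    refine Finset.sum_congr rfl fun n _ => Finset.sum_congr rfl fun k _ => ?_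
    rw [mul_sub, ← e_mul_conj, map_mul, Complex.conj_ofReal]
    push_cast
    ring
  -- A symmetric bound for the integrated kernel; its second summand vanishes on the diagonal,
  -- where `0⁻¹ = 0`.
  set G : ℕ → ℕ → ℝ := fun n k => (if n = k then 2 * Δ else 0) + 2 / δ * |(n : ℝ) - k|⁻¹ with hG
  have hGnn : ∀ n k, 0 ≤ G n k := fun n k => by
    simp only [hG]
    split_ifs <;> positivity
  have hGsymm : ∀ n k, G n k = G k n := fun n k => by
    simp only [hG, abs_sub_comm (n : ℝ) k, eq_comm]
  have hker : ∀ n ∈ s, ∀ k ∈ s, ‖∫ α in (-Δ)..Δ, e (α * (m n - m k))‖ ≤ G n k := by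
    have off : ∀ n ∈ s, ∀ k ∈ s, k < n →
        0 < |m n - m k| ∧ |m n - m k|⁻¹ ≤ 2 / δ * |(n : ℝ) - k|⁻¹ := by
      intro n hn k hk hkn
      have h1 := hm n hn k hk hkn
      have h2 : (0 : ℝ) < (n : ℝ) - k := sub_pos.2 (by exact_mod_cast hkn)
      have h3 : 0 < δ * ((n : ℝ) - k) := mul_pos hδ h2
      have h4 : 0 < m n - m k := by linarith
      rw [abs_of_pos h4, abs_of_pos h2]
      refine ⟨h4, ?_⟩
      have : 2 / δ * ((n : ℝ) - k)⁻¹ = (δ * ((n : ℝ) - k) / 2)⁻¹ := by field_simp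
      rw [this]
      exact inv_anti₀ (by linarith) (by linarith)
    intro n hn k hk
    rcases lt_trichotomy n k with h | h | h
    · obtain ⟨h1, h2⟩ := off k hk n hn h
      rw [abs_sub_comm] at h1 h2
      rw [abs_sub_comm (k : ℝ)] at h2
      refine (norm_integral_e_le _ _ (abs_pos.1 h1)).trans ?_
      simpa [hG, h.ne] using h2
    · subst h
      simpa [hG] using norm_integral_e_le_length Δ (m n - m n) hΔ
    · obtain ⟨h1, h2⟩ := off n hn k hk h
      refine (norm_integral_e_le _ _ (abs_pos.1 h1)).trans ?_
      simpa [hG, h.ne'] using h2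
  have hrow : ∀ n ∈ s, ∑ k ∈ s, G n k ≤ 2 * Δ + 4 / δ * harm N := by
    intro n hn
    simp only [hG, Finset.sum_add_distrib, Finset.sum_ite_eq, hn, if_true, ← Finset.mul_sum]
    have h1 : ∑ k ∈ s, |(n : ℝ) - k|⁻¹ ≤ 2 * harm N :=
      (Finset.sum_le_sum_of_subset_of_nonneg hs fun _ _ _ => by positivity).trans
        (sum_inv_dist_le N n (Nat.lt_succ_iff.1 (Finset.mem_range.1 (hs hn))))
    have h2 := mul_le_mul_of_nonneg_left h1 (by positivity : 0 ≤ 2 / δ)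
    have h3 : 2 / δ * (2 * harm N) = 4 / δ * harm N := by ring
    linarith
  have hint : ((∫ α in (-Δ)..Δ, ‖∑ n ∈ s, (a n : ℂ) * e (α * m n)‖ ^ 2 : ℝ) : ℂ)
      = ∑ n ∈ s, ∑ k ∈ s, ((a n * a k : ℝ) : ℂ) * ∫ α in (-Δ)..Δ, e (α * (m n - m k)) := by
    rw [← intervalIntegral.integral_ofReal]
    simp_rw [hexp]
    rw [intervalIntegral.integral_finsetSum]
    · refine Finset.sum_congr rfl fun n _ => ?_
      rw [intervalIntegral.integral_finsetSum]
      · refine Finset.sum_congr rfl fun k _ => ?_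
        rw [intervalIntegral.integral_const_mul]
      · intro k _
        exact (continuous_const.mul (continuous_e_mul _)).intervalIntegrable _ _
    · intro n _
      exact (continuous_finsetSum _ fun k _ =>
        continuous_const.mul (continuous_e_mul _)).intervalIntegrable _ _
  calc ∫ α in (-Δ)..Δ, ‖∑ n ∈ s, (a n : ℂ) * e (α * m n)‖ ^ 2
      ≤ ‖((∫ α in (-Δ)..Δ, ‖∑ n ∈ s, (a n : ℂ) * e (α * m n)‖ ^ 2 : ℝ) : ℂ)‖ := by
        rw [Complex.norm_real]
        exact Real.le_norm_self _
    _ ≤ ∑ n ∈ s, ∑ k ∈ s, (a n ^ 2 / 2 * G n k + a k ^ 2 / 2 * G n k) := by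
        rw [hint]
        refine (norm_sum_le _ _).trans (Finset.sum_le_sum fun n hn => ?_)
        refine (norm_sum_le _ _).trans (Finset.sum_le_sum fun k hk => ?_)
        rw [norm_mul, Complex.norm_real, Real.norm_eq_abs, abs_mul, ← add_mul]
        refine mul_le_mul ?_ (hker n hn k hk) (norm_nonneg _) (by positivity)
        nlinarith [sq_nonneg (|a n| - |a k|), sq_abs (a n), sq_abs (a k)]
    _ = ∑ n ∈ s, a n ^ 2 * ∑ k ∈ s, G n k := by
        simp_rw [Finset.sum_add_distrib]
        rw [Finset.sum_comm (f := fun n k => a k ^ 2 / 2 * G n k), ← Finset.sum_add_distrib]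
        refine Finset.sum_congr rfl fun n _ => ?_
        rw [Finset.mul_sum, ← Finset.sum_add_distrib]
        refine Finset.sum_congr rfl fun k _ => ?_
        rw [hGsymm k n]
        ring
    _ ≤ ∑ n ∈ s, a n ^ 2 * (2 * Δ + 4 / δ * harm N) :=
        Finset.sum_le_sum fun n hn => mul_le_mul_of_nonneg_left (hrow n hn) (sq_nonneg _)
    _ = (∑ n ∈ s, a n ^ 2) * (2 * Δ + 4 / δ * harm N) := by rw [Finset.sum_mul]

/-! ### Separation of the floors and the coefficients of `L` -/

/-- The difference of floors is at least `1` and exceeds `y ^ (c - 1) * (n - k) - 1`; adding the two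
bounds removes the error from the floors. -/
lemma floor_rpow_gap (c y : ℝ) (hc : 1 < c) (hy : 0 < y) (n k : ℕ) (hk : y < k) (hkn : k < n) :
    y ^ (c - 1) * ((n : ℝ) - k) ≤ 2 * ((⌊(n : ℝ) ^ c⌋ : ℝ) - ⌊(k : ℝ) ^ c⌋) := by
  have hk0 : (0 : ℝ) < k := hy.trans hk
  have hkn' : (k : ℝ) + 1 ≤ n := by exact_mod_cast hkn
  have hn0 : (0 : ℝ) < n := by linarith
  have split : ∀ x : ℝ, 0 < x → x ^ c = x * x ^ (c - 1) := fun x hx => by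
    rw [Real.rpow_sub_one hx.ne']
    field_simp
  have h1 : (k : ℝ) ^ (c - 1) ≤ (n : ℝ) ^ (c - 1) :=
    Real.rpow_le_rpow hk0.le (by linarith) (by linarith)
  have h2 : y ^ (c - 1) ≤ (n : ℝ) ^ (c - 1) :=
    Real.rpow_le_rpow hy.le (by linarith) (by linarith)
  have h3 : (1 : ℝ) ≤ (n : ℝ) ^ (c - 1) :=
    Real.one_le_rpow (by exact_mod_cast (by omega : 1 ≤ n)) (by linarith)
  have h4 : (n : ℝ) ^ (c - 1) * ((n : ℝ) - k) ≤ (n : ℝ) ^ c - (k : ℝ) ^ c := by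
    rw [split n hn0, split k hk0]
    nlinarith
  have h5 : y ^ (c - 1) * ((n : ℝ) - k) ≤ (n : ℝ) ^ c - (k : ℝ) ^ c :=
    (mul_le_mul_of_nonneg_right h2 (by linarith)).trans h4
  have h6 : (k : ℝ) ^ c + 1 ≤ (n : ℝ) ^ c := by nlinarith
  have h7 : ⌊(k : ℝ) ^ c⌋ + 1 ≤ ⌊(n : ℝ) ^ c⌋ := by
    rw [← Int.floor_add_one]
    exact Int.floor_le_floor h6
  have h8 : (⌊(k : ℝ) ^ c⌋ : ℝ) + 1 ≤ ⌊(n : ℝ) ^ c⌋ := by exact_mod_cast h7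
  have h9 := Int.lt_floor_add_one ((n : ℝ) ^ c)
  have h10 := Int.floor_le ((k : ℝ) ^ c)
  linarith

open Classical in
/-- The total sieve weight attached to `p + 2`. -/
noncomputable def sieveSum (D : ℝ) (lam : ℕ → ℝ) (p : ℕ) : ℝ :=
  ∑ d ∈ (Finset.range (⌊D⌋₊ + 1)).filter (fun d => d ∣ p + 2), lam d

lemma abs_sieveSum_le (D : ℝ) (lam : ℕ → ℝ) (h : ∀ d, |lam d| ≤ 1) (p : ℕ) :
    |sieveSum D lam p| ≤ tau (p + 2) := by
  unfold sieveSum tau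
  refine (Finset.abs_sum_le_sum_abs _ _).trans
    ((Finset.sum_le_card_nsmul _ _ 1 fun d _ => h d).trans ?_)
  rw [nsmul_eq_mul, mul_one, Nat.cast_le]
  refine Finset.card_le_card fun d hd => ?_
  exact Nat.mem_divisors.2 ⟨(Finset.mem_filter.1 hd).2, by omega⟩

lemma L_eq (c μ X D : ℝ) (lam : ℕ → ℝ) (α : ℝ) :
    L c μ X D lam α = ∑ p ∈ (Finset.range (⌊X⌋₊ + 1)).filter
        (fun p : ℕ => p.Prime ∧ μ * X < (p : ℝ)),
      ((Real.log p * sieveSum D lam p : ℝ) : ℂ) * e (α * (⌊(p : ℝ) ^ c⌋ : ℝ)) := by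
  classical
  unfold L sieveSum
  simp_rw [← and_assoc, Finset.mul_sum]
  have : ∀ d : ℕ, (Finset.range (⌊X⌋₊ + 1)).filter
        (fun p : ℕ => (p.Prime ∧ μ * X < (p : ℝ)) ∧ d ∣ (p + 2))
      = ((Finset.range (⌊X⌋₊ + 1)).filter
        (fun p : ℕ => p.Prime ∧ μ * X < (p : ℝ))).filter (fun p => d ∣ p + 2) :=
    fun d => (Finset.filter_filter _ _ _).symm
  simp_rw [this, Finset.sum_filter (p := fun p => _ ∣ p + 2)]
  rw [Finset.sum_comm]
  refine Finset.sum_congr rfl fun p _ => ?_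
  push_cast
  rw [Finset.sum_filter, Finset.sum_mul]
  refine Finset.sum_congr rfl fun d _ => ?_
  split_ifs
  · ring
  · simp

theorem stmt_5 (c μ : ℝ) (hc1 : 1 < c) (hc2 : c < 17 / 16) (hμ1 : 0 < μ) (hμ2 : μ < 1) :
    ∃ C : ℝ, 0 < C ∧
      ∀ X : ℝ, 3 ≤ X → ∀ D : ℝ, 2 ≤ D → D ≤ X → ∀ Δ : ℝ, 0 < Δ → Δ ≤ X ^ (1 - c) →
        ∀ lam : ℕ → ℝ, IsSieveWeight D lam →
          (∫ α in (-Δ)..Δ, ‖L c μ X D lam α‖ ^ 2) ≤ C * X ^ (2 - c) * Real.log X ^ 6 := by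
  set K : ℝ := 4 / μ ^ (c - 1) with hK
  have hμc : 0 < μ ^ (c - 1) := Real.rpow_pos_of_pos hμ1 _
  have hK0 : 0 < K := by positivity
  -- `54 = 2 * 3 ^ 3` comes from `N ≤ 2X` and `harm N ≤ 3 log X` in the divisor moment.
  refine ⟨54 * (2 + 3 * K), by positivity, ?_⟩
  intro X hX D _ _ Δ hΔ hΔX lam hlam
  have hX0 : 0 < X := by linarith
  set l := Real.log X with hl
  have hl1 : 1 ≤ l := by
    rw [hl, Real.le_log_iff_exp_le hX0]
    linarith [Real.exp_one_lt_d9]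
  set N := ⌊X⌋₊ + 2 with hN
  have hNX : (N : ℝ) ≤ 2 * X := by
    have := Nat.floor_le hX0.le
    rw [hN]
    push_cast
    linarith
  have hharm : harm N ≤ 3 * l := by
    refine (harm_le N).trans ?_
    have h1 : Real.log N ≤ Real.log (X ^ 2) :=
      Real.log_le_log (by rw [hN]; positivity) (by nlinarith)
    rw [Real.log_pow] at h1
    push_cast at h1
    linarith
  set s := (Finset.range (⌊X⌋₊ + 1)).filter (fun p : ℕ => p.Prime ∧ μ * X < (p : ℝ)) with hs
  have hsum : ∑ p ∈ s, (Real.log p * sieveSum D lam p) ^ 2 ≤ l ^ 2 * (54 * X * l ^ 3) := by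
    calc ∑ p ∈ s, (Real.log p * sieveSum D lam p) ^ 2
        ≤ ∑ p ∈ s, l ^ 2 * tau (p + 2) ^ 2 := by
          refine Finset.sum_le_sum fun p hp => ?_
          rw [hs, Finset.mem_filter, Finset.mem_range] at hp
          have hp1 : (1 : ℝ) ≤ p := by exact_mod_cast hp.2.1.one_lt.le
          have hpX : (p : ℝ) ≤ X := (Nat.le_floor_iff hX0.le).1 (by omega)
          rw [mul_pow]
          refine mul_le_mul ?_ ?_ (sq_nonneg _) (sq_nonneg _)
          · exact pow_le_pow_left₀ (Real.log_nonneg hp1)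
              (Real.log_le_log (by linarith) hpX) 2
          · rw [← sq_abs]
            exact pow_le_pow_left₀ (abs_nonneg _) (abs_sieveSum_le D lam hlam.1 p) 2
      _ = l ^ 2 * ∑ n ∈ s.image (· + 2), tau n ^ 2 := by
          rw [← Finset.mul_sum, Finset.sum_image]
          intro a _ b _ h
          simpa using h
      _ ≤ l ^ 2 * ∑ n ∈ Finset.Ioc 0 N, tau n ^ 2 := by
          refine mul_le_mul_of_nonneg_left ?_ (sq_nonneg _)
          refine Finset.sum_le_sum_of_subset_of_nonneg ?_ fun _ _ _ => sq_nonneg _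
          intro n hn
          obtain ⟨p, hp, rfl⟩ := Finset.mem_image.1 hn
          rw [hs, Finset.mem_filter, Finset.mem_range] at hp
          rw [Finset.mem_Ioc]
          omega
      _ ≤ l ^ 2 * (54 * X * l ^ 3) := by
          refine mul_le_mul_of_nonneg_left ((sum_tau_sq_le N).trans ?_) (sq_nonneg _)
          calc (N : ℝ) * harm N ^ 3 ≤ (2 * X) * (3 * l) ^ 3 :=
                mul_le_mul hNX (pow_le_pow_left₀ (harm_nonneg N) hharm 3)
                  (pow_nonneg (harm_nonneg N) 3) (by positivity)
            _ = 54 * X * l ^ 3 := by ring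
  have hXc : 0 < X ^ (1 - c) := Real.rpow_pos_of_pos hX0 _
  have hδ : 0 < (μ * X) ^ (c - 1) := Real.rpow_pos_of_pos (by positivity) _
  have hδinv : 4 / (μ * X) ^ (c - 1) = K * X ^ (1 - c) := by
    rw [Real.mul_rpow hμ1.le hX0.le, hK, (by ring : 1 - c = -(c - 1)), Real.rpow_neg hX0.le]
    field_simp
  have hmain := mean_square_le N s
    ((Finset.filter_subset _ _).trans (Finset.range_subset_range.2 (by omega)))
    (fun p => Real.log p * sieveSum D lam p) (fun p => (⌊(p : ℝ) ^ c⌋ : ℝ)) Δ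
    ((μ * X) ^ (c - 1)) hΔ hδ (fun n _ k hk hkn =>
      floor_rpow_gap c (μ * X) hc1 (by positivity) n k (Finset.mem_filter.1 hk).2.2 hkn)
  simp_rw [L_eq]
  refine hmain.trans ?_
  have hfac : 2 * Δ + 4 / (μ * X) ^ (c - 1) * harm N ≤ (2 + 3 * K) * (X ^ (1 - c) * l) := by
    rw [hδinv]
    have h1 : K * X ^ (1 - c) * harm N ≤ K * X ^ (1 - c) * (3 * l) :=
      mul_le_mul_of_nonneg_left hharm (by positivity)
    nlinarith
  have hpow : X ^ (2 - c) = X * X ^ (1 - c) := by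
    rw [(by ring : 2 - c = 1 + (1 - c)), Real.rpow_add hX0, Real.rpow_one]
  calc (∑ p ∈ s, (Real.log p * sieveSum D lam p) ^ 2)
        * (2 * Δ + 4 / (μ * X) ^ (c - 1) * harm N)
      ≤ (l ^ 2 * (54 * X * l ^ 3)) * ((2 + 3 * K) * (X ^ (1 - c) * l)) :=
        mul_le_mul hsum hfac
          (add_nonneg (by positivity) (mul_nonneg (by positivity) (harm_nonneg N))) (by positivity)
    _ = 54 * (2 + 3 * K) * X ^ (2 - c) * l ^ 6 := by
        rw [hpow]
        ring
end

section
/- Let $c$ and $\mu$ be fixed real numbers with $1 < c < \frac{17}{16}$ and $0 < \mu < 1$. There exists a constant $C = C(c, \mu) > 0$ such that for every real $X \geq 3$ and every real $\Delta$ with $0 < \Delta \leq X^{1-c}$, one has $\int_{-\Delta}^{\Delta} |I(\alpha)|^2 \, d\alpha \leq C X^{2-c} (\log X)^6$. -/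
/-- `I(α) = ∫_{μX}^{X} e(α t^c) dt`. -/
noncomputable def I (c μ X : ℝ) (α : ℝ) : ℂ := ∫ t in (μ * X)..X, e (α * t ^ c)

lemma hasDerivAt_e (t : ℝ) : HasDerivAt e (2 * Real.pi * Complex.I * e t) t := by
  have h := ((Complex.ofRealCLM.hasDerivAt (x := t)).const_mul
    (2 * Real.pi * Complex.I : ℂ)).cexp
  refine HasDerivAt.congr_deriv (f := e) h ?_
  simp [e]
  ring

lemma continuous_e : Continuous e := by
  unfold e
  fun_prop

lemma norm_I_le (c μ X α : ℝ) (hμ1 : 0 < μ) (hμ2 : μ < 1) (hX : 0 < X) : ‖I c μ X α‖ ≤ X := by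
  have h := intervalIntegral.norm_integral_le_of_norm_le_const (a := μ * X) (b := X)
    (f := fun t => e (α * t ^ c)) (C := 1) (fun t _ => (norm_e _).le)
  have h1 : |X - μ * X| ≤ X := by
    rw [abs_of_nonneg (by nlinarith)]
    nlinarith
  unfold I
  linarith

/-- The first derivative test for `I`, with the frequency scaled by `X ^ c`. -/
lemma norm_I_decay (c μ X α : ℝ) (hc1 : 1 < c) (hc2 : c < 17 / 16) (hμ1 : 0 < μ) (hμ2 : μ < 1)
    (hX : 0 < X) : X ^ c * |α| * ‖I c μ X α‖ ≤ 3 * μ ^ (-c) * X := by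
  have hμX : 0 < μ * X := by positivity
  have hle : μ * X ≤ X := by nlinarith
  have hpos : ∀ t ∈ Set.uIcc (μ * X) X, 0 < t := fun t ht => by
    rw [Set.uIcc_of_le hle] at ht
    exact hμX.trans_le ht.1
  have hcont : ContinuousOn (fun t : ℝ => e (α * t ^ c)) (Set.uIcc (μ * X) X) := by
    apply continuous_e.comp_continuousOn
    exact continuousOn_const.mul
      (continuousOn_id.rpow_const fun t ht => Or.inl (hpos t ht).ne')
  have hcont2 : ContinuousOn (fun t : ℝ => ((t ^ (-c) : ℝ) : ℂ) * e (α * t ^ c))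
      (Set.uIcc (μ * X) X) := by
    refine ContinuousOn.mul ?_ hcont
    apply Complex.continuous_ofReal.comp_continuousOn
    exact continuousOn_id.rpow_const fun t ht => Or.inl (hpos t ht).ne'
  have hderiv : ∀ t ∈ Set.uIcc (μ * X) X,
      HasDerivAt (fun t : ℝ => ((t ^ (1 - c) : ℝ) : ℂ) * e (α * t ^ c))
        ((1 - c : ℂ) * (((t ^ (-c) : ℝ) : ℂ) * e (α * t ^ c))
          + (2 * Real.pi * Complex.I * α * c) * e (α * t ^ c)) t := by
    intro t ht
    have ht0 := hpos t ht
    have h1 := (Real.hasDerivAt_rpow_const (x := t) (p := 1 - c) (Or.inl ht0.ne')).ofReal_comp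
    have h2 := (Real.hasDerivAt_rpow_const (x := t) (p := c) (Or.inl ht0.ne')).const_mul α
    have h3 := (hasDerivAt_e (α * t ^ c)).scomp t h2
    have h4 := h1.mul h3
    refine h4.congr_deriv ?_
    have h5 : ((t ^ (1 - c) : ℝ) : ℂ) * ((t ^ (c - 1) : ℝ) : ℂ) = 1 := by
      rw [← Complex.ofReal_mul, ← Real.rpow_add ht0]
      simp
    have h6 : (1 - c - 1 : ℝ) = -c := by ring
    rw [h6]
    simp only [Function.comp, Complex.real_smul]
    push_cast
    linear_combination (2 * Real.pi * Complex.I * α * c * e (α * t ^ c)) * h5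
  have hi1 := (hcont.intervalIntegrable (μ := MeasureTheory.volume)).const_mul (2 * Real.pi * Complex.I * α * c)
  have hi2 := (hcont2.intervalIntegrable (μ := MeasureTheory.volume)).const_mul (1 - c : ℂ)
  have hftc := intervalIntegral.integral_eq_sub_of_hasDerivAt hderiv (hi2.add hi1)
  rw [intervalIntegral.integral_add hi2 hi1, intervalIntegral.integral_const_mul,
    intervalIntegral.integral_const_mul] at hftc
  change _ + _ * I c μ X α = _ at hftc
  set J := ∫ t in (μ * X)..X, ((t ^ (-c) : ℝ) : ℂ) * e (α * t ^ c) with hJ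
  have hXc : X ^ (-c) * X = X ^ (1 - c) := by
    rw [← Real.rpow_add_one hX.ne']
    congr 1
    ring
  have hJle : ‖J‖ ≤ μ ^ (-c) * X ^ (1 - c) := by
    have h := intervalIntegral.norm_integral_le_of_norm_le_const (a := μ * X) (b := X)
      (f := fun t => ((t ^ (-c) : ℝ) : ℂ) * e (α * t ^ c)) (C := (μ * X) ^ (-c)) (by
        intro t ht
        rw [Set.uIoc_of_le hle] at ht
        have ht0 : 0 < t := hμX.trans ht.1
        rw [norm_mul, norm_e, mul_one, Complex.norm_real, Real.norm_of_nonneg (by positivity)]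
        exact Real.rpow_le_rpow_of_nonpos hμX ht.1.le (by linarith))
    have h1 : |X - μ * X| ≤ X := by
      rw [abs_of_nonneg (by nlinarith)]
      nlinarith
    calc ‖J‖ ≤ (μ * X) ^ (-c) * |X - μ * X| := h
      _ ≤ (μ * X) ^ (-c) * X := by gcongr
      _ = _ := by rw [Real.mul_rpow hμ1.le hX.le, mul_assoc, hXc]
  have hbd : ∀ t : ℝ, μ * X ≤ t →
      ‖((t ^ (1 - c) : ℝ) : ℂ) * e (α * t ^ c)‖ ≤ μ ^ (-c) * X ^ (1 - c) := by
    intro t ht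
    have ht0 : 0 < t := hμX.trans_le ht
    rw [norm_mul, norm_e, mul_one, Complex.norm_real, Real.norm_of_nonneg (by positivity)]
    calc t ^ (1 - c) ≤ (μ * X) ^ (1 - c) :=
          Real.rpow_le_rpow_of_nonpos hμX ht (by linarith)
      _ = μ ^ (1 - c) * X ^ (1 - c) := Real.mul_rpow hμ1.le hX.le
      _ ≤ _ := by
        gcongr ?_ * _
        exact Real.rpow_le_rpow_of_exponent_ge hμ1 hμ2.le (by linarith)
  have hmain : |α| * ‖I c μ X α‖ ≤ 3 * (μ ^ (-c) * X ^ (1 - c)) := by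
    have heq : (2 * Real.pi * Complex.I * α * c) * I c μ X α =
        ((X ^ (1 - c) : ℝ) : ℂ) * e (α * X ^ c)
          - (((μ * X) ^ (1 - c) : ℝ) : ℂ) * e (α * (μ * X) ^ c) - (1 - c : ℂ) * J := by
      rw [← hftc]; ring
    have hn : ‖(2 * Real.pi * Complex.I * α * c) * I c μ X α‖ =
        (2 * Real.pi * c) * (|α| * ‖I c μ X α‖) := by
      simp [abs_of_pos Real.pi_pos, abs_of_pos (by linarith : 0 < c)]
      ring
    have hc : ‖(1 - c : ℂ)‖ ≤ 1 := by
      have : (1 - c : ℂ) = ((1 - c : ℝ) : ℂ) := by push_cast; ring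
      rw [this, Complex.norm_real, Real.norm_eq_abs, abs_le]
      constructor <;> linarith
    have h1 : ‖(1 - c : ℂ) * J‖ ≤ μ ^ (-c) * X ^ (1 - c) := by
      rw [norm_mul]
      calc _ ≤ 1 * ‖J‖ := by gcongr
        _ ≤ _ := by rw [one_mul]; exact hJle
    have h2 : (2 * Real.pi * c) * (|α| * ‖I c μ X α‖) ≤ 3 * (μ ^ (-c) * X ^ (1 - c)) := by
      rw [← hn, heq]
      have := norm_sub_le (((X ^ (1 - c) : ℝ) : ℂ) * e (α * X ^ c)
          - (((μ * X) ^ (1 - c) : ℝ) : ℂ) * e (α * (μ * X) ^ c)) ((1 - c : ℂ) * J)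
      have := norm_sub_le (((X ^ (1 - c) : ℝ) : ℂ) * e (α * X ^ c))
          ((((μ * X) ^ (1 - c) : ℝ) : ℂ) * e (α * (μ * X) ^ c))
      linarith [hbd X hle, hbd (μ * X) le_rfl]
    have h3 : 1 ≤ 2 * Real.pi * c := by nlinarith [Real.pi_gt_three]
    have h4 : 0 ≤ |α| * ‖I c μ X α‖ := by positivity
    nlinarith
  have hXX : X ^ c * X ^ (1 - c) = X := by
    rw [← Real.rpow_add hX]; simp
  calc X ^ c * |α| * ‖I c μ X α‖ = X ^ c * (|α| * ‖I c μ X α‖) := by ring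
    _ ≤ X ^ c * (3 * (μ ^ (-c) * X ^ (1 - c))) := by gcongr
    _ = 3 * μ ^ (-c) * (X ^ c * X ^ (1 - c)) := by ring
    _ = _ := by rw [hXX]

theorem stmt_6 (c μ : ℝ) (hc1 : 1 < c) (hc2 : c < 17 / 16) (hμ1 : 0 < μ) (hμ2 : μ < 1) :
    ∃ C : ℝ, 0 < C ∧
      ∀ X : ℝ, 3 ≤ X → ∀ Δ : ℝ, 0 < Δ → Δ ≤ X ^ (1 - c) →
        (∫ α in (-Δ)..Δ, ‖I c μ X α‖ ^ 2) ≤ C * X ^ (2 - c) * Real.log X ^ 6 := by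
  set K := 3 * μ ^ (-c) with hK
  refine ⟨(1 + K ^ 2) * Real.pi, by positivity, ?_⟩
  intro X hX3 Δ hΔ _
  have hX : 0 < X := by linarith
  have hA : 0 < X ^ c := by positivity
  have hpt : ∀ α, ‖I c μ X α‖ ^ 2 ≤ (1 + K ^ 2) * X ^ 2 * (1 + (X ^ c * α) ^ 2)⁻¹ := by
    intro α
    have h1 := norm_I_le c μ X α hμ1 hμ2 hX
    have h2 := norm_I_decay c μ X α hc1 hc2 hμ1 hμ2 hX
    rw [← div_eq_mul_inv, le_div_iff₀ (by positivity)]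
    have h3 := pow_le_pow_left₀ (norm_nonneg _) h1 2
    have h4 := pow_le_pow_left₀ (by positivity) h2 2
    rw [← hK, mul_pow, mul_pow, sq_abs, mul_pow] at h4
    nlinarith
  have hcg : Continuous fun α : ℝ => (1 + K ^ 2) * X ^ 2 * (1 + (X ^ c * α) ^ 2)⁻¹ := by
    refine continuous_const.mul (Continuous.inv₀ (by fun_prop) fun α => ?_)
    positivity
  have hint : (∫ α in (-Δ)..Δ, ‖I c μ X α‖ ^ 2) ≤
      ∫ α in (-Δ)..Δ, (1 + K ^ 2) * X ^ 2 * (1 + (X ^ c * α) ^ 2)⁻¹ := by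
    rw [intervalIntegral.integral_of_le (by linarith), intervalIntegral.integral_of_le (by linarith)]
    refine MeasureTheory.integral_mono_of_nonneg (Filter.Eventually.of_forall fun α => ?_) ?_
      (Filter.Eventually.of_forall hpt)
    · simp only [Pi.zero_apply]; positivity
    · exact (hcg.intervalIntegrable (-Δ) Δ).1
  have hval : (∫ α in (-Δ)..Δ, (1 + (X ^ c * α) ^ 2)⁻¹) ≤ (X ^ c)⁻¹ * Real.pi := by
    rw [intervalIntegral.integral_comp_mul_left (fun x => (1 + x ^ 2)⁻¹) hA.ne',
      integral_inv_one_add_sq, smul_eq_mul]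
    gcongr
    linarith [Real.arctan_lt_pi_div_two (X ^ c * Δ), Real.neg_pi_div_two_lt_arctan (X ^ c * -Δ)]
  have hlog : 1 ≤ Real.log X := by
    rw [Real.le_log_iff_exp_le hX]
    linarith [Real.exp_one_lt_d9]
  have hpow : X ^ 2 * (X ^ c)⁻¹ = X ^ (2 - c) := by
    rw [Real.rpow_sub hX, Real.rpow_two, div_eq_mul_inv]
  rw [intervalIntegral.integral_const_mul] at hint
  calc _ ≤ _ := hint
    _ ≤ (1 + K ^ 2) * X ^ 2 * ((X ^ c)⁻¹ * Real.pi) := by gcongr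
    _ = (1 + K ^ 2) * Real.pi * X ^ (2 - c) := by rw [← hpow]; ring
    _ ≤ _ := le_mul_of_one_le_right (by positivity) (one_le_pow₀ hlog)
end
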